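/- Every variety of continuous algebras has free algebras: let Σ be a signature and E a set of equations between extended terms (each over some finite set of variables). Then for every ω-cpo M there exist a continuous Σ-algebra F satisfying all equations in E and a continuous map η : M → F such that for every continuous Σ-algebra A satisfying all equations in E and every continuous map f : M → A there is a unique continuous Σ-homomorphism f̄ : F → A with f̄ ∘ η = f. -/

import Mathlib

/-!
The free algebra is built from extended terms with the elements of `M` as variables.  A *model*
is an algebra `A` of the variety together with a continuous map `f : M → A`.  Keep the extended
terms over `M` that are defined in every model, preorder them by comparing their values in all
models, and let `F` be the induced partial order.  Since the terms form a set, `F` is small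
although the models form a proper class: `F` is the subalgebra generated by `M` in the
(large) product of all models, with each element named by a term.

Every model yields an evaluation map `ev X : F → X.A`, and these maps jointly reflect the order.
Hence the join of an ω-chain of classes `[t k]` is the class of the formal join `⋁ t k`, the
operations are given by term application, and all evaluations are continuous homomorphisms.

* The equations hold in `F`: a term defined in every model under `ev X ∘ g` is defined in `F`
  under `g` (`evals_of_models`), because the chain condition is reflected by the
  evaluations; equality of values is reflected as well.
* The class `[t]` is the value of `t` in `F` itself (`evals_rep`), and continuous homomorphisms
  preserve values (`Evals.map`), so a homomorphism out of `F` is determined by its composite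
  with `η`.
-/

open OmegaCompletePartialOrder

universe u v w

/-- A function between ω-cpos is (ω-)continuous if it is monotone and preserves
joins of ω-chains. -/
def OmegaContinuous {α : Type u} {β : Type v} [OmegaCompletePartialOrder α]
    [OmegaCompletePartialOrder β] (f : α → β) : Prop :=
  ∃ hm : Monotone f, ∀ ch : Chain α, f (ωSup ch) = ωSup (ch.map ⟨f, hm⟩)

/-- A continuous `Σ`-algebra for a signature `Sg : ℕ → Type` (the family of sets of `n`-ary
operation symbols): an ω-cpo `A` with, for each `σ ∈ Sg n`, a continuous operation
`A^n → A` (the power `Fin n → A` carrying the coordinatewise order). -/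
structure ContSigmaAlg (Sg : ℕ → Type u) (A : Type v) [OmegaCompletePartialOrder A] where
  op : ∀ {n : ℕ}, Sg n → (Fin n → A) → A
  op_cont : ∀ {n : ℕ} (σ : Sg n), OmegaContinuous (op σ)

/-- A continuous `Σ`-homomorphism: a continuous map preserving all the operations. -/
structure IsContHom {Sg : ℕ → Type u} {A : Type v} {B : Type w}
    [OmegaCompletePartialOrder A] [OmegaCompletePartialOrder B]
    (algA : ContSigmaAlg Sg A) (algB : ContSigmaAlg Sg B) (h : A → B) : Prop where
  cont : OmegaContinuous h
  map_op : ∀ {n : ℕ} (σ : Sg n) (a : Fin n → A), h (algA.op σ a) = algB.op σ (h ∘ a)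

/-- Extended terms over a signature `Sg` and a set `V` of variables: ordinary terms together
with formal countable joins `⋁_{k ∈ ℕ} t_k`. -/
inductive ExtTerm (Sg : ℕ → Type u) (V : Type v) : Type (max u v)
  | var : V → ExtTerm Sg V
  | app : ∀ {n : ℕ}, Sg n → (Fin n → ExtTerm Sg V) → ExtTerm Sg V
  | join : (ℕ → ExtTerm Sg V) → ExtTerm Sg V

/-- The (partial) interpretation of extended terms: `Evals alg f t a` says that under the
interpretation `f : V → A` of the variables, the extended term `t` is defined and has value
`a`.  A formal join `⋁_k t_k` is defined iff each `t_k` is defined and the values form an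
ascending chain, in which case its value is the join of the chain. -/
inductive Evals {Sg : ℕ → Type u} {V : Type v} {A : Type w} [OmegaCompletePartialOrder A]
    (alg : ContSigmaAlg Sg A) (f : V → A) : ExtTerm Sg V → A → Prop
  | var (v : V) : Evals alg f (.var v) (f v)
  | app {n : ℕ} (σ : Sg n) (t : Fin n → ExtTerm Sg V) (a : Fin n → A) :
      (∀ i, Evals alg f (t i) (a i)) → Evals alg f (.app σ t) (alg.op σ a)
  | join (t : ℕ → ExtTerm Sg V) (a : ℕ → A) (ha : ∀ k, a k ≤ a (k + 1)) :
      (∀ k, Evals alg f (t k) (a k)) →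
      Evals alg f (.join t) (ωSup ⟨a, monotone_nat_of_le_succ ha⟩)

/-- An extended term is definable in an algebra if its interpretation is defined for every
interpretation of the variables. -/
def Definable {Sg : ℕ → Type u} {V : Type v} {A : Type w} [OmegaCompletePartialOrder A]
    (alg : ContSigmaAlg Sg A) (t : ExtTerm Sg V) : Prop :=
  ∀ f : V → A, ∃ a : A, Evals alg f t a

/-- An algebra satisfies the equation `t = t'` if for every interpretation of the variables
both sides are defined and equal. -/
def SatisfiesEq {Sg : ℕ → Type u} {V : Type v} {A : Type w} [OmegaCompletePartialOrder A]
    (alg : ContSigmaAlg Sg A) (t t' : ExtTerm Sg V) : Prop :=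
  ∀ f : V → A, ∃ a : A, Evals alg f t a ∧ Evals alg f t' a

/-! ### Evaluation of extended terms -/

/-- The partial interpretation is single-valued. -/
theorem Evals.unique {Sg : ℕ → Type u} {V : Type v} {A : Type w} [OmegaCompletePartialOrder A]
    {alg : ContSigmaAlg Sg A} {f : V → A} {t : ExtTerm Sg V} {a b : A}
    (ha : Evals alg f t a) (hb : Evals alg f t b) : a = b := by
  induction ha generalizing b with
  | var v => cases hb; rfl
  | app σ t a _ ih =>
    cases hb with
    | app _ _ b hb => rw [funext fun i => ih i (hb i)]
  | join t a ha _ ih =>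
    cases hb with
    | join _ b hb' hb =>
      obtain rfl : a = b := funext fun i => ih i (hb i)
      rfl

/-- Continuous homomorphisms preserve values of extended terms. -/
theorem Evals.map {Sg : ℕ → Type u} {V : Type v} {A B : Type w} [OmegaCompletePartialOrder A]
    [OmegaCompletePartialOrder B] {algA : ContSigmaAlg Sg A} {algB : ContSigmaAlg Sg B}
    {h : A → B} (hh : IsContHom algA algB h) {f : V → A} {t : ExtTerm Sg V} {a : A}
    (ha : Evals algA f t a) : Evals algB (h ∘ f) t (h a) := by
  induction ha with
  | var v => exact Evals.var (f := h ∘ f) v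
  | app σ t a _ ih =>
    rw [hh.map_op]
    exact .app σ t _ ih
  | join t a ha _ ih =>
    obtain ⟨hm, hc⟩ := hh.cont
    rw [hc]
    exact Evals.join t (h ∘ a) (fun k => hm (ha k)) ih

namespace FreeAlg

/-! ### Everywhere defined terms over `M` -/

/-- An algebra of the variety under `M`: a continuous algebra satisfying all the equations,
together with a continuous map from `M`. -/
structure Model (Sg : ℕ → Type) {ι : Type} (Veq : ι → Type)
    (lhs rhs : ∀ i, ExtTerm Sg (Veq i)) (M : Type) [OmegaCompletePartialOrder M] where
  A : Type
  inst : OmegaCompletePartialOrder A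
  alg : ContSigmaAlg Sg A
  sat : ∀ i, SatisfiesEq alg (lhs i) (rhs i)
  f : M → A
  cont : OmegaContinuous f

attribute [instance] Model.inst

section

variable (Sg : ℕ → Type) {ι : Type} (Veq : ι → Type)
  (lhs rhs : ∀ i, ExtTerm Sg (Veq i)) (M : Type) [OmegaCompletePartialOrder M]

/-- Extended terms over `M` whose value is defined in every model. -/
def DefTerm : Type :=
  {t : ExtTerm Sg M // ∀ X : Model Sg Veq lhs rhs M, ∃ a, Evals X.alg X.f t a}

end

variable {Sg : ℕ → Type} {ι : Type} {Veq : ι → Type}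
  {lhs rhs : ∀ i, ExtTerm Sg (Veq i)} {M : Type} [OmegaCompletePartialOrder M]

/-- The value in the model `X` of an everywhere defined term. -/
noncomputable def DefTerm.val (X : Model Sg Veq lhs rhs M) (t : DefTerm Sg Veq lhs rhs M) : X.A :=
  (t.2 X).choose

theorem DefTerm.evals (X : Model Sg Veq lhs rhs M) (t : DefTerm Sg Veq lhs rhs M) :
    Evals X.alg X.f t.1 (t.val X) :=
  (t.2 X).choose_spec

/-- Terms are compared by their values in all models. -/
instance : Preorder (DefTerm Sg Veq lhs rhs M) where
  le t s := ∀ X, t.val X ≤ s.val X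
  le_refl _ _ := le_rfl
  le_trans _ _ _ h k X := (h X).trans (k X)

variable (Sg Veq lhs rhs M) in
/-- The carrier of the free algebra: everywhere defined terms, identified when they have the
same value in every model. -/
abbrev Free : Type := Antisymmetrization (DefTerm Sg Veq lhs rhs M) (· ≤ ·)

/-- A term representing an element of the free algebra. -/
noncomputable def rep (a : Free Sg Veq lhs rhs M) : DefTerm Sg Veq lhs rhs M :=
  ofAntisymmetrization (· ≤ ·) a

/-- The element of the free algebra represented by a term. -/
def mk (t : DefTerm Sg Veq lhs rhs M) : Free Sg Veq lhs rhs M :=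
  toAntisymmetrization (· ≤ ·) t

theorem mk_rep (a : Free Sg Veq lhs rhs M) : mk (rep a) = a :=
  toAntisymmetrization_ofAntisymmetrization _ a

/-- Evaluation of the free algebra in a model. -/
noncomputable def ev (X : Model Sg Veq lhs rhs M) (a : Free Sg Veq lhs rhs M) : X.A :=
  (rep a).val X

theorem evals_ev (X : Model Sg Veq lhs rhs M) (a : Free Sg Veq lhs rhs M) :
    Evals X.alg X.f (rep a).1 (ev X a) :=
  (rep a).evals X

/-- The evaluations jointly reflect the order. -/
theorem le_iff {a b : Free Sg Veq lhs rhs M} : a ≤ b ↔ ∀ X, ev X a ≤ ev X b :=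
  (ofAntisymmetrization_le_ofAntisymmetrization_iff (a := a) (b := b)).symm

theorem ev_mono (X : Model Sg Veq lhs rhs M) : Monotone (ev X) := fun _ _ h => le_iff.1 h X

theorem ev_ext {a b : Free Sg Veq lhs rhs M} (h : ∀ X, ev X a = ev X b) : a = b :=
  le_antisymm (le_iff.2 fun X => (h X).le) (le_iff.2 fun X => (h X).ge)

theorem ev_mk (X : Model Sg Veq lhs rhs M) (t : DefTerm Sg Veq lhs rhs M) :
    ev X (mk t) = t.val X := by
  have h : AntisymmRel (· ≤ ·) (rep (mk t)) t :=
    Quotient.exact (mk_rep (mk t))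
  exact le_antisymm (h.1 X) (h.2 X)

theorem ev_mk_eq (X : Model Sg Veq lhs rhs M) (t : DefTerm Sg Veq lhs rhs M) {a : X.A}
    (h : Evals X.alg X.f t.1 a) : ev X (mk t) = a :=
  (ev_mk X t).trans ((t.evals X).unique h)

/-! ### The ω-cpo structure -/

theorem evals_join (X : Model Sg Veq lhs rhs M) (c : Chain (Free Sg Veq lhs rhs M)) :
    Evals X.alg X.f (.join fun k => (rep (c k)).1) (ωSup (c.map ⟨ev X, ev_mono X⟩)) :=
  Evals.join _ (fun k => ev X (c k)) (fun k => ev_mono X (c.monotone k.le_succ))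
    fun k => evals_ev X (c k)

/-- The join of a chain, represented by the formal join of representatives. -/
noncomputable def sup (c : Chain (Free Sg Veq lhs rhs M)) : Free Sg Veq lhs rhs M :=
  mk ⟨.join fun k => (rep (c k)).1, fun X => ⟨_, evals_join X c⟩⟩

theorem ev_sup (X : Model Sg Veq lhs rhs M) (c : Chain (Free Sg Veq lhs rhs M)) :
    ev X (sup c) = ωSup (c.map ⟨ev X, ev_mono X⟩) :=
  ev_mk_eq X _ (evals_join X c)

noncomputable instance : OmegaCompletePartialOrder (Free Sg Veq lhs rhs M) where
  ωSup := sup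
  le_ωSup c i := le_iff.2 fun X => by
    rw [ev_sup]
    exact le_ωSup (c.map ⟨ev X, ev_mono X⟩) i
  ωSup_le c x h := le_iff.2 fun X => by
    rw [ev_sup]
    exact ωSup_le _ _ fun i => ev_mono X (h i)

theorem ev_cont (X : Model Sg Veq lhs rhs M) : OmegaContinuous (ev X) :=
  ⟨ev_mono X, ev_sup X⟩

/-! ### The operations and the unit -/

theorem evals_app (X : Model Sg Veq lhs rhs M) {n : ℕ} (σ : Sg n)
    (a : Fin n → Free Sg Veq lhs rhs M) :
    Evals X.alg X.f (.app σ fun i => (rep (a i)).1) (X.alg.op σ (ev X ∘ a)) :=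
  .app σ _ _ fun i => evals_ev X (a i)

/-- An operation of the free algebra: term application on representatives. -/
noncomputable def op {n : ℕ} (σ : Sg n) (a : Fin n → Free Sg Veq lhs rhs M) :
    Free Sg Veq lhs rhs M :=
  mk ⟨.app σ fun i => (rep (a i)).1, fun X => ⟨_, evals_app X σ a⟩⟩

theorem ev_op (X : Model Sg Veq lhs rhs M) {n : ℕ} (σ : Sg n)
    (a : Fin n → Free Sg Veq lhs rhs M) : ev X (op σ a) = X.alg.op σ (ev X ∘ a) :=
  ev_mk_eq X _ (evals_app X σ a)

/-- A map into the free algebra is continuous as soon as its evaluations are. -/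
theorem cont_of_ev {P : Type} [OmegaCompletePartialOrder P] {g : P → Free Sg Veq lhs rhs M}
    (h : ∀ X, OmegaContinuous (ev X ∘ g)) : OmegaContinuous g := by
  have hm : Monotone g := fun a b hab => le_iff.2 fun X => (h X).1 hab
  refine ⟨hm, fun ch => ev_ext fun X => ?_⟩
  rw [(ev_cont X).2]
  exact (h X).2 ch

theorem comp_cont {P Q R : Type*} [OmegaCompletePartialOrder P] [OmegaCompletePartialOrder Q]
    [OmegaCompletePartialOrder R] {g : Q → R} {f : P → Q} (hg : OmegaContinuous g)
    (hf : OmegaContinuous f) : OmegaContinuous (g ∘ f) := by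
  obtain ⟨hgm, hgc⟩ := hg
  obtain ⟨hfm, hfc⟩ := hf
  refine ⟨hgm.comp hfm, fun ch => ?_⟩
  rw [Function.comp_apply, hfc, hgc]
  rfl

theorem pow_cont {P Q : Type*} [OmegaCompletePartialOrder P] [OmegaCompletePartialOrder Q]
    {g : P → Q} (hg : OmegaContinuous g) (n : ℕ) :
    OmegaContinuous (fun a : Fin n → P => g ∘ a) := by
  obtain ⟨hm, hc⟩ := hg
  refine ⟨fun a b hab i => hm (hab i), fun ch => funext fun i => ?_⟩
  exact hc (ch.map (Pi.evalOrderHom i))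

variable (Sg Veq lhs rhs M) in
/-- The algebra structure of the free algebra. -/
noncomputable def alg : ContSigmaAlg Sg (Free Sg Veq lhs rhs M) where
  op := op
  op_cont {n} σ := cont_of_ev fun X => by
    have h : ev X ∘ op σ = X.alg.op σ ∘ fun a : Fin n → Free Sg Veq lhs rhs M => ev X ∘ a :=
      funext fun a => ev_op X σ a
    rw [h]
    exact comp_cont (X.alg.op_cont σ) (pow_cont (ev_cont X) n)

theorem ev_hom (X : Model Sg Veq lhs rhs M) : IsContHom (alg Sg Veq lhs rhs M) X.alg (ev X) :=
  ⟨ev_cont X, ev_op X⟩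

variable (Sg Veq lhs rhs) in
/-- The unit `M → F`, sending each element to itself as a variable. -/
def unit (m : M) : Free Sg Veq lhs rhs M :=
  mk ⟨.var m, fun _ => ⟨_, .var m⟩⟩

theorem ev_unit (X : Model Sg Veq lhs rhs M) : ev X ∘ unit Sg Veq lhs rhs = X.f :=
  funext fun m => ev_mk_eq X _ (.var m)

theorem unit_cont : OmegaContinuous (unit Sg Veq lhs rhs : M → _) :=
  cont_of_ev fun X => by
    rw [ev_unit]
    exact X.cont

/-! ### Evaluation in the free algebra -/

/-- A term defined in every model, under the evaluations of `g`, is defined in the free algebra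
under `g`. -/
theorem evals_of_models {V : Type} (g : V → Free Sg Veq lhs rhs M) (t : ExtTerm Sg V)
    (h : ∀ X : Model Sg Veq lhs rhs M, ∃ a, Evals X.alg (ev X ∘ g) t a) :
    ∃ a, Evals (alg Sg Veq lhs rhs M) g t a := by
  induction t with
  | var v => exact ⟨_, .var v⟩
  | app σ t ih =>
    have h' : ∀ i, ∃ a, Evals (alg Sg Veq lhs rhs M) g (t i) a := fun i => ih i fun X => by
      obtain ⟨_, ha⟩ := h X
      cases ha with
      | app _ _ b hb => exact ⟨_, hb i⟩
    choose a ha using h'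
    exact ⟨_, .app σ t a ha⟩
  | join t ih =>
    have h' : ∀ i, ∃ a, Evals (alg Sg Veq lhs rhs M) g (t i) a := fun i => ih i fun X => by
      obtain ⟨_, ha⟩ := h X
      cases ha with
      | join _ b _ hb => exact ⟨_, hb i⟩
    choose a ha using h'
    refine ⟨_, .join t a (fun k => le_iff.2 fun X => ?_) ha⟩
    obtain ⟨_, hX⟩ := h X
    cases hX with
    | join _ b hb' hb =>
      have hab : ∀ k, ev X (a k) = b k := fun k => ((ha k).map (ev_hom X)).unique (hb k)
      rw [hab, hab]
      exact hb' k

theorem satisfies (i : ι) : SatisfiesEq (alg Sg Veq lhs rhs M) (lhs i) (rhs i) := by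
  intro g
  have hX : ∀ X : Model Sg Veq lhs rhs M, _ := fun X => X.sat i (ev X ∘ g)
  obtain ⟨a, ha⟩ := evals_of_models g (lhs i) fun X => (hX X).imp fun _ h => h.1
  obtain ⟨b, hb⟩ := evals_of_models g (rhs i) fun X => (hX X).imp fun _ h => h.2
  obtain rfl : a = b := ev_ext fun X => by
    obtain ⟨c, hc, hc'⟩ := hX X
    exact ((ha.map (ev_hom X)).unique hc).trans (hc'.unique (hb.map (ev_hom X)))
  exact ⟨a, ha, hb⟩

/-- Every element of the free algebra is the value, in the free algebra itself, of a term
representing it. -/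
theorem evals_rep (a : Free Sg Veq lhs rhs M) :
    Evals (alg Sg Veq lhs rhs M) (unit Sg Veq lhs rhs) (rep a).1 a := by
  have hX : ∀ X, Evals X.alg (ev X ∘ unit Sg Veq lhs rhs) (rep a).1 (ev X a) := fun X => by
    rw [ev_unit]
    exact evals_ev X a
  obtain ⟨b, hb⟩ := evals_of_models (unit Sg Veq lhs rhs) (rep a).1 fun X => ⟨_, hX X⟩
  obtain rfl : b = a := ev_ext fun X => (hb.map (ev_hom X)).unique (hX X)
  exact hb

end FreeAlg

/-- **Every variety of continuous algebras has free algebras:** given a signature `Sg` and a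
set `E` of equations between extended terms (indexed by `ι`, each over its own finite set
`Veq i` of variables), for every ω-cpo `M` there exist a continuous `Σ`-algebra `F`
satisfying all the equations and a continuous map `η : M → F` such that every continuous map
`f : M → A` into a continuous `Σ`-algebra `A` satisfying all the equations extends uniquely
to a continuous `Σ`-homomorphism `f̄ : F → A` with `f̄ ∘ η = f`. -/
theorem variety_has_free_algebras
    (Sg : ℕ → Type) {ι : Type} (Veq : ι → Type) [∀ i, Finite (Veq i)]
    (lhs rhs : ∀ i, ExtTerm Sg (Veq i))
    (M : Type) [OmegaCompletePartialOrder M] :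
    ∃ (F : Type) (instF : OmegaCompletePartialOrder F) (algF : ContSigmaAlg Sg F)
      (η : M → F),
      (∀ i, SatisfiesEq algF (lhs i) (rhs i)) ∧
      OmegaContinuous η ∧
      ∀ (A : Type) (instA : OmegaCompletePartialOrder A) (algA : ContSigmaAlg Sg A),
        (∀ i, SatisfiesEq algA (lhs i) (rhs i)) →
        ∀ f : M → A, OmegaContinuous f →
          ∃! fbar : F → A, IsContHom algF algA fbar ∧ fbar ∘ η = f := by
  refine ⟨FreeAlg.Free Sg Veq lhs rhs M, inferInstance, FreeAlg.alg Sg Veq lhs rhs M,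
    FreeAlg.unit Sg Veq lhs rhs, FreeAlg.satisfies, FreeAlg.unit_cont, ?_⟩
  intro A instA algA sat f hf
  let X : FreeAlg.Model Sg Veq lhs rhs M := ⟨A, instA, algA, sat, f, hf⟩
  refine ⟨FreeAlg.ev X, ⟨FreeAlg.ev_hom X, FreeAlg.ev_unit X⟩, ?_⟩
  rintro h ⟨hh, rfl⟩
  exact funext fun a => ((FreeAlg.evals_rep a).map hh).unique (FreeAlg.evals_ev X a)
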